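/- For all λ, μ ∈ ℤ^θ and all integers n ≥ 1, the extension group Ext^n computed in the abelian category C_k (which has enough projectives) satisfies Ext^n_{C_k}(Z(λ), Z(μ)^τ) = 0. -/

import Mathlib

open scoped TensorProduct

/-- The data of a `ℤ^θ`-graded algebra over `k` with a triangular decomposition
`U⁻ ⊗ U⁰ ⊗ U⁺ ≃ U` satisfying the axioms of Andersen–Jantzen–Soergel, together with
the character-twist `μ ↦ μ̃` and the base algebra map `π : U⁰ → k`. -/
structure AJSCtx (k : Type) [Field k] (θ : ℕ) where
  /-- the underlying algebra -/
  U : Type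
  [ringU : Ring U]
  [algU : Algebra k U]
  /-- the `ℤ^θ`-grading of `U` -/
  grade : (Fin θ → ℤ) → Submodule k U
  internal : DirectSum.IsInternal grade
  one_mem : (1 : U) ∈ grade 0
  mul_mem : ∀ {ν μ : Fin θ → ℤ} {a b : U}, a ∈ grade ν → b ∈ grade μ → a * b ∈ grade (ν + μ)
  /-- the negative part `U⁻` -/
  Um : Subalgebra k U
  /-- the zero part `U⁰` -/
  U0 : Subalgebra k U
  /-- the positive part `U⁺` -/
  Up : Subalgebra k U
  Um_graded : Subalgebra.toSubmodule Um = ⨆ ν, Subalgebra.toSubmodule Um ⊓ grade ν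
  U0_graded : Subalgebra.toSubmodule U0 = ⨆ ν, Subalgebra.toSubmodule U0 ⊓ grade ν
  Up_graded : Subalgebra.toSubmodule Up = ⨆ ν, Subalgebra.toSubmodule Up ⊓ grade ν
  /-- multiplication induces a linear isomorphism `U⁻ ⊗ U⁰ ⊗ U⁺ → U` -/
  triangular :
    Function.Bijective
      (TensorProduct.lift
        ((LinearMap.mul k U).compl₁₂ Um.val.toLinearMap
          (TensorProduct.lift
            ((LinearMap.mul k U).compl₁₂ U0.val.toLinearMap Up.val.toLinearMap))))
  U0_deg0 : Subalgebra.toSubmodule U0 ≤ grade 0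
  Up_deg0 : Subalgebra.toSubmodule Up ⊓ grade 0 = Submodule.span k {1}
  Um_deg0 : Subalgebra.toSubmodule Um ⊓ grade 0 = Submodule.span k {1}
  Up_pos : ∀ ν : Fin θ → ℤ, Subalgebra.toSubmodule Up ⊓ grade ν ≠ ⊥ → 0 ≤ ν
  Um_neg : ∀ ν : Fin θ → ℤ, Subalgebra.toSubmodule Um ⊓ grade ν ≠ ⊥ → ν ≤ 0
  finUp : FiniteDimensional k Up
  finUm : FiniteDimensional k Um
  commU0 : ∀ s t : U0, s * t = t * s
  /-- the group homomorphism `μ ↦ μ̃` into algebra automorphisms of `U⁰` -/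
  tilde : (Fin θ → ℤ) → (U0 ≃ₐ[k] U0)
  tilde_zero : tilde 0 = AlgEquiv.refl
  tilde_add : ∀ μ ν : Fin θ → ℤ, tilde (μ + ν) = (tilde μ).trans (tilde ν)
  tilde_comm : ∀ (μ : Fin θ → ℤ), ∀ u ∈ grade μ, ∀ s : U0, (s : U) * u = u * ((tilde μ s : U))
  /-- the algebra map `π : U⁰ → k` -/
  π : U0 →ₐ[k] k

attribute [instance] AJSCtx.ringU AJSCtx.algU

variable {k : Type} [Field k] {θ : ℕ}

/-- An object of the category `C_k`: a finite-dimensional `ℤ^θ`-graded `U`-module `M`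
with `s·m = π(μ̃(s))·m` for `s ∈ U⁰` and `m ∈ M` homogeneous of degree `μ`. -/
structure CMod (C : AJSCtx k θ) where
  /-- the underlying space -/
  M : Type
  [acg : AddCommGroup M]
  [modk : Module k M]
  /-- the action of `U`, as a representation `U → End_k(M)` -/
  ρ : C.U →ₐ[k] Module.End k M
  /-- the `ℤ^θ`-grading of `M` -/
  grM : (Fin θ → ℤ) → Submodule k M
  internal : DirectSum.IsInternal grM
  fin : FiniteDimensional k M
  act_graded : ∀ (ν μ : Fin θ → ℤ) (u : C.U) (m : M),
    u ∈ C.grade ν → m ∈ grM μ → ρ u m ∈ grM (ν + μ)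
  act_U0 : ∀ (s : C.U0) (μ : Fin θ → ℤ) (m : M),
    m ∈ grM μ → ρ (s : C.U) m = C.π (C.tilde μ s) • m

attribute [instance] CMod.acg CMod.modk CMod.fin

variable {C : AJSCtx k θ}

/-- A submodule is graded if it is the sum of its homogeneous components. -/
def CMod.gradedSub (A : CMod C) (p : Submodule k A.M) : Prop :=
  p = ⨆ ν, p ⊓ A.grM ν

/-- A submodule stable under the `U`-action. -/
def CMod.stable (A : CMod C) (p : Submodule k A.M) : Prop :=
  ∀ u : C.U, ∀ m ∈ p, A.ρ u m ∈ p

/-- Morphisms in `C_k`: `U`-equivariant degree-preserving `k`-linear maps. -/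
def IsCHom (A B : CMod C) (f : A.M →ₗ[k] B.M) : Prop :=
  (∀ (u : C.U) (m : A.M), f (A.ρ u m) = B.ρ u (f m)) ∧
  (∀ ν : Fin θ → ℤ, ∀ m ∈ A.grM ν, f m ∈ B.grM ν)

/-- The space `Hom_{C_k}(A, B)` as a `k`-submodule of the linear maps. -/
def homC (A B : CMod C) : Submodule k (A.M →ₗ[k] B.M) where
  carrier := {f | IsCHom A B f}
  add_mem' := by
    rintro f g ⟨hf1, hf2⟩ ⟨hg1, hg2⟩
    refine ⟨fun u m => ?_, fun ν m hm => Submodule.add_mem _ (hf2 ν m hm) (hg2 ν m hm)⟩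
    simp [LinearMap.add_apply, hf1 u m, hg1 u m, map_add]
  zero_mem' := by
    refine ⟨fun u m => ?_, fun ν m hm => Submodule.zero_mem _⟩
    simp
  smul_mem' := by
    rintro c f ⟨hf1, hf2⟩
    refine ⟨fun u m => ?_, fun ν m hm => Submodule.smul_mem _ _ (hf2 ν m hm)⟩
    simp [LinearMap.smul_apply, hf1 u m, map_smul]

/-- The linear map `U → M`, `u ↦ u·m`. -/
def actVec (A : CMod C) (m : A.M) : C.U →ₗ[k] A.M where
  toFun u := A.ρ u m
  map_add' a b := by simp [map_add]
  map_smul' c a := by simp [map_smul]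

/-- `v` is a highest-weight vector of weight `μ`: it is homogeneous of degree `μ` and is
annihilated by every homogeneous element of `U⁺` of nonzero degree. -/
def IsHWvec (A : CMod C) (μ : Fin θ → ℤ) (v : A.M) : Prop :=
  v ∈ A.grM μ ∧
  ∀ ν : Fin θ → ℤ, ν ≠ 0 → ∀ u ∈ Subalgebra.toSubmodule C.Up ⊓ C.grade ν, A.ρ u v = 0

/-- A simple object of `C_k`. -/
def CMod.IsSimpleObj (A : CMod C) : Prop :=
  (∃ m : A.M, m ≠ 0) ∧
  ∀ p : Submodule k A.M, A.gradedSub p → A.stable p → p = ⊥ ∨ p = ⊤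

/-- `A` is (isomorphic to) the simple module `L(μ)`: it is simple and has a nonzero
highest-weight vector of weight `μ`. -/
def IsHWSimple (μ : Fin θ → ℤ) (A : CMod C) : Prop :=
  A.IsSimpleObj ∧ ∃ v : A.M, v ≠ 0 ∧ IsHWvec A μ v

/-- `Z` together with `m ∈ Z` is (a realization of) the Verma module `Z(μ)`:
`m` is a highest-weight vector of weight `μ` and the action map `U⁻ → Z`, `a ↦ a·m`,
is a linear isomorphism. -/
def IsVerma (μ : Fin θ → ℤ) (Z : CMod C) (m : Z.M) : Prop :=
  IsHWvec Z μ m ∧ Function.Bijective ((actVec Z m).comp C.Um.val.toLinearMap)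

/-- Isomorphism in `C_k`. -/
def CIso (A B : CMod C) : Prop :=
  ∃ f : A.M →ₗ[k] B.M, IsCHom A B f ∧ Function.Bijective f

/-- The subquotient `p/q` of `A` is isomorphic in `C_k` to `B`: there is a surjective
`U`-equivariant degree-preserving linear map `p → B` whose kernel is exactly `q`. -/
def SubquotIso (A : CMod C) (p q : Submodule k A.M) (B : CMod C) : Prop :=
  ∃ f : ↥p →ₗ[k] B.M,
    Function.Surjective f ∧
    (∀ x : ↥p, f x = 0 ↔ (x : A.M) ∈ q) ∧
    (∀ (u : C.U) (x : ↥p) (h : A.ρ u (x : A.M) ∈ p), f ⟨A.ρ u (x : A.M), h⟩ = B.ρ u (f x)) ∧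
    (∀ (ν : Fin θ → ℤ) (x : ↥p), (x : A.M) ∈ A.grM ν → f x ∈ B.grM ν)

/-- A composition series of `A` in `C_k` (by graded `U`-submodules with simple
subquotients). -/
structure IsCompSeries (A : CMod C) (r : ℕ) (F : Fin (r + 1) → Submodule k A.M) : Prop where
  mono : Monotone F
  bot : F 0 = ⊥
  top : F (Fin.last r) = ⊤
  graded : ∀ i, A.gradedSub (F i)
  stable : ∀ i, A.stable (F i)
  simpleQuot : ∀ i : Fin r, ∃ S : CMod C,
    S.IsSimpleObj ∧ SubquotIso A (F i.succ) (F i.castSucc) S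

/-- `[A : L] = n`: some (equivalently, by Jordan–Hölder, any) composition series of `A`
has exactly `n` factors isomorphic to `L`. -/
def HasMult (A L : CMod C) (n : ℕ) : Prop :=
  ∃ (r : ℕ) (F : Fin (r + 1) → Submodule k A.M), IsCompSeries A r F ∧
    n = Nat.card {i : Fin r // SubquotIso A (F i.succ) (F i.castSucc) L}

/-- Projective object of `C_k`. -/
def CProjective (P : CMod C) : Prop :=
  ∀ (A B : CMod C) (g : A.M →ₗ[k] B.M), IsCHom A B g → Function.Surjective g →
    ∀ f : P.M →ₗ[k] B.M, IsCHom P B f →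
      ∃ h : P.M →ₗ[k] A.M, IsCHom P A h ∧ g ∘ₗ h = f

/-- A simple (graded, `U`-stable) submodule. -/
def CMod.IsSimpleSub (A : CMod C) (p : Submodule k A.M) : Prop :=
  p ≠ ⊥ ∧ A.gradedSub p ∧ A.stable p ∧
    ∀ q ≤ p, A.gradedSub q → A.stable q → q = ⊥ ∨ q = p

/-- The socle: the sum of all simple graded `U`-submodules. -/
def csocle (A : CMod C) : Submodule k A.M :=
  sSup {p : Submodule k A.M | A.IsSimpleSub p}

/-- The antiautomorphism `τ` of `U`. -/
structure TauData (C : AJSCtx k θ) where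
  /-- the antiautomorphism, as a linear map -/
  τ : C.U →ₗ[k] C.U
  τ_one : τ 1 = 1
  τ_mul : ∀ a b : C.U, τ (a * b) = τ b * τ a
  τ_invol : ∀ a : C.U, τ (τ a) = a
  τ_fix : ∀ s : C.U0, τ (s : C.U) = (s : C.U)
  τ_Up : Submodule.map τ (Subalgebra.toSubmodule C.Up) = Subalgebra.toSubmodule C.Um
  τ_deg : ∀ ν : Fin θ → ℤ, ∀ u ∈ C.grade ν, τ u ∈ C.grade (-ν)

/-- `B` is (a realization of) the `τ`-twisted dual `A^τ`: there is a perfect pairing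
`B × A → k`, vanishing between distinct homogeneous components, with
`⟨u·b, a⟩ = ⟨b, τ(u)·a⟩`. -/
def IsTauDual (T : TauData C) (A B : CMod C) : Prop :=
  ∃ pr : B.M →ₗ[k] A.M →ₗ[k] k,
    Function.Bijective pr ∧
    (∀ (u : C.U) (b : B.M) (a : A.M), pr (B.ρ u b) a = pr b (A.ρ (T.τ u) a)) ∧
    (∀ lam ν : Fin θ → ℤ, lam ≠ ν → ∀ b ∈ B.grM lam, ∀ a ∈ A.grM ν, pr b a = 0)

/-- The sum of all graded `U`-submodules `N` of `Z` with `N_μ = 0`. -/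
def vermaRad (Z : CMod C) (μ : Fin θ → ℤ) : Submodule k Z.M :=
  sSup {N : Submodule k Z.M | Z.gradedSub N ∧ Z.stable N ∧ N ⊓ Z.grM μ = ⊥}

/-!
Projective objects of `C_k` are direct summands of sums of induced modules `U ⊗_{U⁰} k^ν`, which
are free over `U⁻`, and Verma modules are free over `U⁻` too. Hence in a projective resolution of
`Z(λ)` every syzygy splits off over `U⁻`. On the other hand `Z(μ)^τ` is coinduced: a morphism
`f : M → Z(μ)^τ` amounts to the functional `x ↦ ⟨f x, m_μ⟩`, and the functionals which arise are
those of weight `μ` that vanish on `I M`, `I` the augmentation ideal of `U⁻`. The functional of a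
cocycle factors through a syzygy, so it extends along a `U⁻`-linear retraction, and the component
of weight `μ` of the extension is the functional of the required primitive.
-/

section Gradings

variable {R ι V W : Type*} [DecidableEq ι] [Ring R] [AddCommGroup V] [Module R V]
  [AddCommGroup W] [Module R W] {gr : ι → Submodule R V}

theorem linearMap_ext_of_homogeneous (h : DirectSum.IsInternal gr) {f g : V →ₗ[R] W}
    (hfg : ∀ i, ∀ x ∈ gr i, f x = g x) : f = g := by
  have hle : iSup gr ≤ LinearMap.eqLocus f g := iSup_le hfg
  ext x
  exact hle (h.submodule_iSup_eq_top ▸ Submodule.mem_top)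

/-- The linear map out of an internal direct sum which agrees with `F i` on the summand of
index `i`. The `F i` are defined on the whole space, but only their restrictions matter. -/
noncomputable def homogeneousLift (h : DirectSum.IsInternal gr) (F : ι → V →ₗ[R] W) :
    V →ₗ[R] W :=
  DirectSum.toModule R ι W (fun i => F i ∘ₗ (gr i).subtype) ∘ₗ
    (LinearEquiv.ofBijective (DirectSum.coeLinearMap gr) h).symm.toLinearMap

theorem homogeneousLift_of_mem (h : DirectSum.IsInternal gr) (F : ι → V →ₗ[R] W) {i : ι} {x : V}
    (hx : x ∈ gr i) : homogeneousLift h F x = F i x := by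
  have hsymm : (LinearEquiv.ofBijective (DirectSum.coeLinearMap gr) h).symm x =
      DirectSum.lof R ι (fun i => gr i) i ⟨x, hx⟩ := by
    rw [LinearEquiv.symm_apply_eq]
    exact (DirectSum.coeLinearMap_lof gr i ⟨x, hx⟩).symm
  simp [homogeneousLift, hsymm]

/-- The projection of an internal direct sum onto its summand of index `i`, as an endomorphism
of the ambient space. -/
noncomputable def homogeneousProj (h : DirectSum.IsInternal gr) (i : ι) : V →ₗ[R] V :=
  homogeneousLift h (Pi.single i LinearMap.id)

theorem homogeneousProj_of_mem (h : DirectSum.IsInternal gr) {i : ι} {x : V} (hx : x ∈ gr i) :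
    homogeneousProj h i x = x := by
  simp [homogeneousProj, homogeneousLift_of_mem h _ hx]

theorem homogeneousProj_of_mem_of_ne (h : DirectSum.IsInternal gr) {i j : ι} {x : V}
    (hx : x ∈ gr j) (hji : j ≠ i) : homogeneousProj h i x = 0 := by
  simp [homogeneousProj, homogeneousLift_of_mem h _ hx, hji]

theorem homogeneousProj_mem (h : DirectSum.IsInternal gr) (i : ι) (x : V) :
    homogeneousProj h i x ∈ gr i := by
  have hle : iSup gr ≤ (gr i).comap (homogeneousProj h i) := by
    refine iSup_le fun j x hx => ?_
    rcases eq_or_ne j i with rfl | hji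
    · simpa [homogeneousProj_of_mem h hx] using hx
    · simp [homogeneousProj_of_mem_of_ne h hx hji]
  exact hle (h.submodule_iSup_eq_top ▸ Submodule.mem_top)

theorem apply_homogeneousProj (h : DirectSum.IsInternal gr) {f : V →ₗ[R] W} {i : ι}
    (hf : ∀ j ≠ i, ∀ x ∈ gr j, f x = 0) (x : V) : f (homogeneousProj h i x) = f x := by
  refine LinearMap.congr_fun (f := f ∘ₗ homogeneousProj h i)
    (linearMap_ext_of_homogeneous h fun j x hx => ?_) x
  rcases eq_or_ne j i with rfl | hji
  · simp [homogeneousProj_of_mem h hx]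
  · simp [homogeneousProj_of_mem_of_ne h hx hji, hf j hji x hx]

theorem homogeneousProj_map {κ : Type*} [DecidableEq κ] {gr' : κ → Submodule R W} {e : ι → κ}
    (he : Function.Injective e) (h : DirectSum.IsInternal gr) (h' : DirectSum.IsInternal gr')
    {f : V →ₗ[R] W} (hf : ∀ i, ∀ x ∈ gr i, f x ∈ gr' (e i)) (i : ι) (x : V) :
    homogeneousProj h' (e i) (f x) = f (homogeneousProj h i x) := by
  refine LinearMap.congr_fun (f := homogeneousProj h' (e i) ∘ₗ f) (g := f ∘ₗ homogeneousProj h i)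
    (linearMap_ext_of_homogeneous h fun j x hx => ?_) x
  rcases eq_or_ne j i with rfl | hji
  · simp [homogeneousProj_of_mem h hx, homogeneousProj_of_mem h' (hf j x hx)]
  · simp [homogeneousProj_of_mem_of_ne h hx hji,
      homogeneousProj_of_mem_of_ne h' (hf j x hx) (he.ne hji)]

theorem isInternal_comp_equiv {κ : Type*} [DecidableEq κ] (h : DirectSum.IsInternal gr)
    (e : κ ≃ ι) : DirectSum.IsInternal fun j => gr (e j) := by
  rw [DirectSum.isInternal_submodule_iff_iSupIndep_and_iSup_eq_top]
  exact ⟨h.submodule_iSupIndep.comp e.injective,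
    (e.iSup_comp (g := gr)).trans h.submodule_iSup_eq_top⟩

theorem isInternal_comap_subtype (h : DirectSum.IsInternal gr) {p : Submodule R V}
    (hp : p = ⨆ i, p ⊓ gr i) : DirectSum.IsInternal fun i => (gr i).comap p.subtype := by
  rw [DirectSum.isInternal_submodule_iff_iSupIndep_and_iSup_eq_top]
  refine ⟨fun i => Submodule.disjoint_def.2 fun x hx hx' => Subtype.ext ?_,
    Submodule.map_injective_of_injective p.injective_subtype ?_⟩
  · refine Submodule.disjoint_def.1 (h.submodule_iSupIndep i) x hx ?_
    have hle : (⨆ j, ⨆ _ : j ≠ i, (gr j).comap p.subtype) ≤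
        (⨆ j, ⨆ _ : j ≠ i, gr j).comap p.subtype :=
      iSup₂_le fun j hj => Submodule.comap_mono (le_iSup₂_of_le j hj le_rfl)
    exact hle hx'
  · simpa [Submodule.map_iSup, Submodule.map_comap_subtype] using hp.symm

theorem isInternal_map (h : DirectSum.IsInternal gr) {f : V →ₗ[R] W}
    (hf : Function.Surjective f) (hker : ∀ i x, f x = 0 → f (homogeneousProj h i x) = 0) :
    DirectSum.IsInternal fun i => (gr i).map f := by
  rw [DirectSum.isInternal_submodule_iff_iSupIndep_and_iSup_eq_top]
  refine ⟨fun i => Submodule.disjoint_def.2 ?_, ?_⟩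
  · rintro _ ⟨x, hx, rfl⟩ hx'
    simp_rw [← Submodule.map_iSup] at hx'
    obtain ⟨y, hy, hyx⟩ := hx'
    have hle : (⨆ j, ⨆ _ : j ≠ i, gr j) ≤ LinearMap.ker (homogeneousProj h i) :=
      iSup₂_le fun j hj z hz => homogeneousProj_of_mem_of_ne h hz hj
    have hproj : homogeneousProj h i (x - y) = x := by
      rw [map_sub, homogeneousProj_of_mem h hx, hle hy, sub_zero]
    rw [← hproj]
    exact hker i _ (by rw [map_sub, hyx, sub_self])
  · rw [← Submodule.map_iSup, h.submodule_iSup_eq_top, Submodule.map_top,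
      LinearMap.range_eq_top.2 hf]

theorem isInternal_pi {α : Type*} [Finite α] {M : α → Type*} [∀ a, AddCommGroup (M a)]
    [∀ a, Module R (M a)] {gr : ∀ a, ι → Submodule R (M a)}
    (h : ∀ a, DirectSum.IsInternal (gr a)) :
    DirectSum.IsInternal fun i => Submodule.pi Set.univ fun a => gr a i := by
  classical
  rw [DirectSum.isInternal_submodule_iff_iSupIndep_and_iSup_eq_top]
  refine ⟨fun i => Submodule.disjoint_def.2 fun x hx hx' => funext fun a => ?_, ?_⟩
  · refine Submodule.disjoint_def.1 ((h a).submodule_iSupIndep i) (x a) (hx a trivial) ?_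
    have hle : (⨆ j, ⨆ _ : j ≠ i, Submodule.pi Set.univ fun a => gr a j) ≤
        (⨆ j, ⨆ _ : j ≠ i, gr a j).comap (LinearMap.proj a) :=
      iSup₂_le fun j hj y hy => le_iSup₂_of_le (f := fun j (_ : j ≠ i) => gr a j) j hj le_rfl
        (hy a trivial)
    exact hle hx'
  · rw [eq_top_iff, ← LinearMap.iSup_range_single R M]
    refine iSup_le fun a => ?_
    rw [← Submodule.map_top, ← (h a).submodule_iSup_eq_top, Submodule.map_iSup]
    exact iSup_mono fun i => Submodule.map_le_iff_le_comap.2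
      (Submodule.le_comap_single_pi fun a => gr a i)

theorem exists_basis_homogeneous {K V : Type*} [Field K] [AddCommGroup V] [Module K V]
    [FiniteDimensional K V] {gr : ι → Submodule K V} (h : DirectSum.IsInternal gr) :
    ∃ (n : ℕ) (b : Module.Basis (Fin n) K V) (deg : Fin n → ι), ∀ i, b i ∈ gr (deg i) := by
  let b := h.collectedBasis fun i => Module.finBasis K (gr i)
  have := FiniteDimensional.fintypeBasisIndex b
  refine ⟨_, b.reindex (Fintype.equivFin _), fun i => ((Fintype.equivFin _).symm i).1, fun i => ?_⟩
  rw [b.reindex_apply]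
  exact h.collectedBasis_mem _ _

end Gradings

section Retractions

theorem exists_retraction_ker {R E Q : Type*} [Ring R] [AddCommGroup E] [AddCommGroup Q]
    [Module R E] [Module R Q] [Module.Projective R Q] {f : E →ₗ[R] Q}
    (hf : Function.Surjective f) :
    ∃ c : E →ₗ[R] LinearMap.ker f, c ∘ₗ (LinearMap.ker f).subtype = LinearMap.id := by
  obtain ⟨s, hs⟩ := Module.projective_lifting_property f LinearMap.id hf
  have hfs : ∀ y, f (s y) = y := LinearMap.congr_fun hs
  refine ⟨(LinearMap.id - s ∘ₗ f).codRestrict _ fun x => by simp [hfs], ?_⟩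
  ext ⟨x, hx⟩
  simp [LinearMap.mem_ker.1 hx]

theorem exists_retraction_range_of_exact {R Z : Type*} {P : ℕ → Type*} [Ring R] [AddCommGroup Z]
    [Module R Z] [Module.Projective R Z] [∀ n, AddCommGroup (P n)] [∀ n, Module R (P n)]
    [∀ n, Module.Projective R (P n)] {d : ∀ n, P (n + 1) →ₗ[R] P n} {ε : P 0 →ₗ[R] Z}
    (hε : Function.Surjective ε) (hex₀ : LinearMap.ker ε = LinearMap.range (d 0))
    (hex : ∀ n, LinearMap.ker (d n) = LinearMap.range (d (n + 1))) (n : ℕ) :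
    ∃ c : P n →ₗ[R] LinearMap.range (d n),
      c ∘ₗ (LinearMap.range (d n)).subtype = LinearMap.id := by
  induction n with
  | zero => exact hex₀ ▸ exists_retraction_ker hε
  | succ n ih =>
    obtain ⟨c, hc⟩ := ih
    have : Module.Projective R (LinearMap.range (d n)) := .of_split _ c hc
    rw [← hex, ← (d n).ker_rangeRestrict]
    exact exists_retraction_ker (d n).surjective_rangeRestrict

end Retractions

section Morphisms

theorem IsCHom.id (A : CMod C) : IsCHom A A LinearMap.id :=
  ⟨fun _ _ => rfl, fun _ _ hm => hm⟩

theorem IsCHom.comp {A B D : CMod C} {g : B.M →ₗ[k] D.M} {f : A.M →ₗ[k] B.M}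
    (hg : IsCHom B D g) (hf : IsCHom A B f) : IsCHom A D (g ∘ₗ f) :=
  ⟨fun u m => by simp [hf.1, hg.1], fun ν m hm => hg.2 ν _ (hf.2 ν m hm)⟩

/-- The `U`-module underlying an object of `C_k`; `U⁻` acts on it by restriction. -/
noncomputable instance CMod.instModuleU (A : CMod C) : Module C.U A.M :=
  Module.compHom A.M A.ρ.toRingHom

theorem CMod.smul_eq (A : CMod C) (u : C.U) (m : A.M) : u • m = A.ρ u m := rfl

instance CMod.instIsScalarTowerU (A : CMod C) : IsScalarTower k C.U A.M where
  smul_assoc c u m := by simp [CMod.smul_eq]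

/-- A morphism of `C_k`, regarded as a `U⁻`-linear map. -/
noncomputable def IsCHom.linearMapUm {A B : CMod C} {f : A.M →ₗ[k] B.M} (hf : IsCHom A B f) :
    A.M →ₗ[C.Um] B.M where
  toFun := f
  map_add' := f.map_add
  map_smul' a m := hf.1 a m

end Morphisms

namespace AJSCtx

variable (C)

theorem isInternal_grade_sub (ν : Fin θ → ℤ) :
    DirectSum.IsInternal fun κ : Fin θ → ℤ => C.grade (κ - ν) :=
  isInternal_comp_equiv C.internal (Equiv.subRight ν)

theorem isInternal_Up :
    DirectSum.IsInternal fun κ => (C.grade κ).comap C.Up.val.toLinearMap :=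
  isInternal_comap_subtype C.internal C.Up_graded

theorem mul_coe_mem_grade {κ : Fin θ → ℤ} {x : C.U} (hx : x ∈ C.grade κ) (s : C.U0) :
    x * s ∈ C.grade κ := by
  simpa using C.mul_mem hx (C.U0_deg0 s.2)

/-- The character `s ↦ π(ν̃(s))` by which `U⁰` acts on elements of degree `ν`. -/
def weightChar (ν : Fin θ → ℤ) : C.U0 →ₐ[k] k := C.π.comp (C.tilde ν).toAlgHom

theorem weightChar_tilde (κ ν : Fin θ → ℤ) (s : C.U0) :
    C.weightChar ν (C.tilde κ s) = C.weightChar (κ + ν) s := by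
  simp [weightChar, C.tilde_add]

theorem coe_mul_of_mem_grade {κ : Fin θ → ℤ} {u : C.U} (hu : u ∈ C.grade κ) (t : C.U0) :
    u * t = (C.tilde (-κ) t : C.U) * u := by
  rw [C.tilde_comm κ u hu, ← AlgEquiv.trans_apply, ← C.tilde_add]
  simp [C.tilde_zero]

section Triangular

/-- The triangular decomposition `U⁻ ⊗ U⁰ ⊗ U⁺ ≃ U`. -/
noncomputable def triangularEquiv : C.Um ⊗[k] (C.U0 ⊗[k] C.Up) ≃ₗ[k] C.U :=
  LinearEquiv.ofBijective _ C.triangular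

theorem triangularEquiv_tmul (a : C.Um) (s : C.U0) (b : C.Up) :
    C.triangularEquiv (a ⊗ₜ (s ⊗ₜ b)) = (a : C.U) * (s * b) := rfl

variable {C} in
theorem linearMap_ext_triangular {W : Type*} [AddCommGroup W] [Module k W] {f g : C.U →ₗ[k] W}
    (hfg : ∀ (a : C.Um) (s : C.U0) (κ : Fin θ → ℤ) (b : C.Up), (b : C.U) ∈ C.grade κ →
      f (a * (s * b)) = g (a * (s * b))) : f = g := by
  rw [← LinearMap.cancel_right C.triangularEquiv.surjective]
  refine TensorProduct.ext (LinearMap.ext fun a => TensorProduct.ext (LinearMap.ext fun s => ?_))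
  exact linearMap_ext_of_homogeneous C.isInternal_Up fun κ b hb => hfg a s κ b hb

end Triangular

section Induced

/-- The left ideal of `U` generated by the elements `s - π(ν̃(s))` with `s ∈ U⁰`, so that
`U ⧸ weightIdeal ν` is the induced module `U ⊗_{U⁰} k^ν`. -/
def weightIdeal (ν : Fin θ → ℤ) : Submodule C.U C.U :=
  Submodule.span C.U (Set.range fun s : C.U0 => (s : C.U) - algebraMap k C.U (C.weightChar ν s))

/-- The quotient map `U → U ⊗_{U⁰} k^ν`. -/
def weightMk (ν : Fin θ → ℤ) : C.U →ₗ[k] C.U ⧸ C.weightIdeal ν :=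
  (C.weightIdeal ν).mkQ.restrictScalars k

theorem weightMk_surjective (ν : Fin θ → ℤ) : Function.Surjective (C.weightMk ν) :=
  (C.weightIdeal ν).mkQ_surjective

theorem weightMk_eq_zero {ν : Fin θ → ℤ} {x : C.U} : C.weightMk ν x = 0 ↔ x ∈ C.weightIdeal ν :=
  Submodule.Quotient.mk_eq_zero _

theorem weightMk_mul_coe (ν : Fin θ → ℤ) (x : C.U) (s : C.U0) :
    C.weightMk ν (x * s) = C.weightChar ν s • C.weightMk ν x := by
  have hgen : (s : C.U) - algebraMap k C.U (C.weightChar ν s) ∈ C.weightIdeal ν :=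
    Submodule.subset_span ⟨s, rfl⟩
  rw [← map_smul, ← sub_eq_zero, ← map_sub, weightMk_eq_zero]
  simpa [mul_sub, Algebra.algebraMap_eq_smul_one] using (C.weightIdeal ν).smul_mem x hgen

variable {C} in
theorem map_eq_zero_of_mem_weightIdeal {ν : Fin θ → ℤ} {W : Type*} [AddCommGroup W] [Module k W]
    {f : C.U →ₗ[k] W} (hf : ∀ (x : C.U) (s : C.U0), f (x * s) = C.weightChar ν s • f x)
    {x : C.U} (hx : x ∈ C.weightIdeal ν) : f x = 0 := by
  obtain ⟨c, rfl⟩ := Finsupp.mem_span_range_iff_exists_finsupp.1 hx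
  rw [Finsupp.sum, map_sum]
  refine Finset.sum_eq_zero fun s _ => ?_
  simp [mul_sub, Algebra.algebraMap_eq_smul_one, hf]

theorem isInternal_map_weightMk (ν : Fin θ → ℤ) :
    DirectSum.IsInternal fun κ : Fin θ → ℤ => (C.grade (κ - ν)).map (C.weightMk ν) := by
  have hgr := C.isInternal_grade_sub ν
  have hproj (κ : Fin θ → ℤ) (x : C.U) (s : C.U0) :
      homogeneousProj hgr κ (x * s) = homogeneousProj hgr κ x * s :=
    homogeneousProj_map (e := id) (f := LinearMap.mulRight k (s : C.U)) Function.injective_id hgr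
      hgr (fun κ x hx => C.mul_coe_mem_grade hx s) κ x
  refine isInternal_map hgr (C.weightMk_surjective ν) fun κ x hx => ?_
  refine map_eq_zero_of_mem_weightIdeal (f := C.weightMk ν ∘ₗ homogeneousProj hgr κ) (fun x s => ?_)
    (C.weightMk_eq_zero.1 hx)
  simp only [LinearMap.comp_apply, hproj, weightMk_mul_coe]

/-- Multiplication `U⁻ ⊗ U⁺ → U`. -/
noncomputable def mulUmUp : C.Um ⊗[k] C.Up →ₗ[k] C.U :=
  TensorProduct.lift ((LinearMap.mul k C.U).compl₁₂ C.Um.val.toLinearMap C.Up.val.toLinearMap)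

theorem mulUmUp_tmul (a : C.Um) (b : C.Up) : C.mulUmUp (a ⊗ₜ b) = (a : C.U) * b := rfl

/-- The projection `U → U⁻ ⊗ U⁺` along `weightIdeal ν`. Moving `s ∈ U⁰` to the right past
`b ∈ U⁺` of degree `κ` turns it into `κ̃(s)`, so `a s b` is sent to `π((κ + ν)~(s)) a ⊗ b`. -/
noncomputable def weightProj (ν : Fin θ → ℤ) : C.U →ₗ[k] C.Um ⊗[k] C.Up :=
  LinearMap.lTensor C.Um (TensorProduct.lift (homogeneousLift C.isInternal_Up fun κ =>
    LinearMap.smulRightₗ (C.weightChar (κ + ν)).toLinearMap).flip) ∘ₗ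
      C.triangularEquiv.symm.toLinearMap

variable {C} in
theorem weightProj_mul_mul (ν : Fin θ → ℤ) (a : C.Um) (s : C.U0) {κ : Fin θ → ℤ} {b : C.Up}
    (hb : (b : C.U) ∈ C.grade κ) :
    C.weightProj ν (a * (s * b)) = C.weightChar (κ + ν) s • (a ⊗ₜ b) := by
  have hlift := homogeneousLift_of_mem C.isInternal_Up (x := b)
    (fun κ => LinearMap.smulRightₗ (C.weightChar (κ + ν)).toLinearMap) hb
  rw [← triangularEquiv_tmul]
  simp [weightProj, hlift]

theorem weightProj_mul_coe (ν : Fin θ → ℤ) (x : C.U) (t : C.U0) :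
    C.weightProj ν (x * t) = C.weightChar ν t • C.weightProj ν x := by
  refine LinearMap.congr_fun (f := C.weightProj ν ∘ₗ LinearMap.mulRight k (t : C.U))
    (g := C.weightChar ν t • C.weightProj ν) (linearMap_ext_triangular fun a s κ b hb => ?_) x
  have hcomm : (a : C.U) * (s * b) * t = a * ((s * C.tilde (-κ) t : C.U0) * b) := by
    rw [mul_assoc, mul_assoc, C.coe_mul_of_mem_grade hb, MulMemClass.coe_mul, mul_assoc]
  simp only [LinearMap.comp_apply, LinearMap.mulRight_apply, LinearMap.smul_apply, hcomm,
    weightProj_mul_mul ν a _ hb, map_mul, weightChar_tilde, neg_add_cancel_left, smul_smul,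
    mul_comm]

theorem weightProj_mulUmUp (ν : Fin θ → ℤ) (t : C.Um ⊗[k] C.Up) :
    C.weightProj ν (C.mulUmUp t) = t := by
  refine LinearMap.congr_fun (f := C.weightProj ν ∘ₗ C.mulUmUp) (g := LinearMap.id)
    (TensorProduct.ext ?_) t
  ext1 a
  refine linearMap_ext_of_homogeneous C.isInternal_Up fun κ b hb => ?_
  change C.weightProj ν (a * b) = a ⊗ₜ b
  simpa using weightProj_mul_mul ν a 1 hb

theorem weightMk_mulUmUp_weightProj (ν : Fin θ → ℤ) (x : C.U) :
    C.weightMk ν (C.mulUmUp (C.weightProj ν x)) = C.weightMk ν x := by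
  refine LinearMap.congr_fun (f := C.weightMk ν ∘ₗ C.mulUmUp ∘ₗ C.weightProj ν)
    (g := C.weightMk ν) (linearMap_ext_triangular fun a s κ b hb => ?_) x
  have hcomm : (a : C.U) * (s * b) = a * b * C.tilde κ s := by
    rw [C.tilde_comm κ b hb, mul_assoc]
  rw [LinearMap.comp_apply, LinearMap.comp_apply, weightProj_mul_mul ν a s hb, map_smul, map_smul,
    mulUmUp_tmul, hcomm, weightMk_mul_coe, weightChar_tilde]

theorem bijective_weightMk_comp_mulUmUp (ν : Fin θ → ℤ) :
    Function.Bijective (C.weightMk ν ∘ₗ C.mulUmUp) := by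
  refine ⟨(injective_iff_map_eq_zero _).2 fun t ht => ?_, fun y => ?_⟩
  · rw [← C.weightProj_mulUmUp ν t]
    exact map_eq_zero_of_mem_weightIdeal (C.weightProj_mul_coe ν) (C.weightMk_eq_zero.1 ht)
  · obtain ⟨x, rfl⟩ := C.weightMk_surjective ν y
    exact ⟨C.weightProj ν x, C.weightMk_mulUmUp_weightProj ν x⟩

/-- The object `U ⊗_{U⁰} k^ν` of `C_k`, with its generator in degree `ν`. -/
noncomputable def induced (ν : Fin θ → ℤ) : CMod C where
  M := C.U ⧸ C.weightIdeal ν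
  ρ := Algebra.lsmul k k (C.U ⧸ C.weightIdeal ν)
  grM κ := (C.grade (κ - ν)).map (C.weightMk ν)
  internal := C.isInternal_map_weightMk ν
  fin :=
    have := C.finUm
    have := C.finUp
    Module.Finite.of_surjective _ (C.bijective_weightMk_comp_mulUmUp ν).surjective
  act_graded := by
    rintro η κ u _ hu ⟨x, hx, rfl⟩
    exact ⟨u * x, (add_sub_assoc η κ ν).symm ▸ C.mul_mem hu hx, rfl⟩
  act_U0 := by
    rintro s κ _ ⟨x, hx, rfl⟩
    change C.weightMk ν (s * x) = C.weightChar κ s • C.weightMk ν x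
    rw [C.tilde_comm _ x hx, weightMk_mul_coe, weightChar_tilde, sub_add_cancel]

instance projective_induced (ν : Fin θ → ℤ) : Module.Projective C.Um (C.induced ν).M := by
  let f : C.Um ⊗[k] C.Up →ₗ[k] (C.induced ν).M := C.weightMk ν ∘ₗ C.mulUmUp
  have hf (a : C.Um) (t : C.Um ⊗[k] C.Up) : f (a • t) = a • f t := by
    induction t using TensorProduct.induction_on with
    | zero => rw [smul_zero, map_zero, smul_zero]
    | add t t' ht ht' => rw [smul_add, map_add, map_add, ht, ht', smul_add]
    | tmul b c => exact congrArg (C.weightMk ν) (mul_assoc (a : C.U) b c)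
  let g : C.Um ⊗[k] C.Up →ₗ[C.Um] (C.induced ν).M := { f with map_smul' := hf }
  exact .of_equiv' (LinearEquiv.ofBijective g (C.bijective_weightMk_comp_mulUmUp ν))

theorem exists_isCHom_induced {A : CMod C} {ν : Fin θ → ℤ} {m : A.M} (hm : m ∈ A.grM ν) :
    ∃ f : (C.induced ν).M →ₗ[k] A.M, IsCHom (C.induced ν) A f ∧ f (C.weightMk ν 1) = m := by
  have hle : C.weightIdeal ν ≤ LinearMap.ker (LinearMap.toSpanSingleton C.U A.M m) := by
    refine Submodule.span_le.2 ?_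
    rintro _ ⟨s, rfl⟩
    simp [CMod.smul_eq, A.act_U0 s ν m hm, weightChar, Algebra.algebraMap_eq_smul_one]
  let f := (C.weightIdeal ν).liftQ _ hle
  refine ⟨f.restrictScalars k, ⟨fun u x => map_smul f u x, ?_⟩, one_smul C.U m⟩
  rintro κ _ ⟨x, hx, rfl⟩
  have hxm := A.act_graded _ _ x m hx hm
  rw [sub_add_cancel] at hxm
  exact hxm

end Induced

end AJSCtx

section Projectives

theorem surjective_lsum_of_span_eq_top {R ι W : Type*} [CommRing R] [Fintype ι] [DecidableEq ι]
    [AddCommGroup W] [Module R W] {M : ι → Type*} [∀ i, AddCommGroup (M i)] [∀ i, Module R (M i)]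
    {b : ι → W} (hb : Submodule.span R (Set.range b) = ⊤) {f : ∀ i, M i →ₗ[R] W}
    (hf : ∀ i, ∃ x, f i x = b i) : Function.Surjective (LinearMap.lsum R M R f) := by
  rw [← LinearMap.range_eq_top, ← top_le_iff, ← hb, Submodule.span_le]
  rintro _ ⟨i, rfl⟩
  obtain ⟨x, hx⟩ := hf i
  exact ⟨Pi.single i x, (LinearMap.lsum_piSingle ..).trans hx⟩

/-- The direct sum of a finite family of objects of `C_k`, on the space of functions. -/
noncomputable def CMod.pi {ι : Type} [Fintype ι] (A : ι → CMod C) : CMod C where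
  M := ∀ i, (A i).M
  ρ := Algebra.lsmul k k (∀ i, (A i).M)
  grM κ := Submodule.pi Set.univ fun i => (A i).grM κ
  internal := isInternal_pi fun i => (A i).internal
  fin := inferInstance
  act_graded η κ u _ hu hm i hi := (A i).act_graded η κ u _ hu (hm i hi)
  act_U0 s κ _ hm := funext fun i => (A i).act_U0 s κ _ (hm i trivial)

theorem CMod.projective_pi {ι : Type} [Fintype ι] (A : ι → CMod C)
    [∀ i, Module.Projective C.Um (A i).M] : Module.Projective C.Um (CMod.pi A).M := by
  classical
  let e : (Π₀ i, (A i).M) ≃ₗ[C.Um] (CMod.pi A).M := DFinsupp.linearEquivFunOnFintype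
  exact .of_equiv' e

theorem CMod.isCHom_proj {ι : Type} [Fintype ι] (A : ι → CMod C) (i : ι) :
    IsCHom (CMod.pi A) (A i) (LinearMap.proj i) :=
  ⟨fun _ _ => rfl, fun _ _ hm => hm i trivial⟩

theorem CMod.isCHom_lsum {ι : Type} [Fintype ι] [DecidableEq ι] {A : ι → CMod C} {B : CMod C}
    {f : ∀ i, (A i).M →ₗ[k] B.M} (hf : ∀ i, IsCHom (A i) B (f i)) :
    IsCHom (CMod.pi A) B (LinearMap.lsum k (fun i => (A i).M) k f) :=
  (homC (CMod.pi A) B).sum_mem fun i _ => (hf i).comp (CMod.isCHom_proj A i)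

theorem CMod.exists_surjective_isCHom (P : CMod C) :
    ∃ (A : CMod C) (f : A.M →ₗ[k] P.M), Module.Projective C.Um A.M ∧ IsCHom A P f ∧
      Function.Surjective f := by
  obtain ⟨n, b, deg, hb⟩ := exists_basis_homogeneous P.internal
  choose f hf hfb using fun i => C.exists_isCHom_induced (hb i)
  exact ⟨CMod.pi fun i => C.induced (deg i), _, CMod.projective_pi _, CMod.isCHom_lsum hf,
    surjective_lsum_of_span_eq_top b.span_eq fun i => ⟨_, hfb i⟩⟩

theorem CProjective.projective_Um {P : CMod C} (hP : CProjective P) :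
    Module.Projective C.Um P.M := by
  obtain ⟨A, f, _, hf, hfs⟩ := P.exists_surjective_isCHom
  obtain ⟨s, hs, hsec⟩ := hP A P f hf hfs LinearMap.id (.id P)
  have hsecUm : hf.linearMapUm ∘ₗ hs.linearMapUm = LinearMap.id :=
    LinearMap.ext fun x => LinearMap.congr_fun hsec x
  exact .of_split _ _ hsecUm

theorem IsVerma.projective_Um {μ : Fin θ → ℤ} {Z : CMod C} {z : Z.M} (hZ : IsVerma μ Z z) :
    Module.Projective C.Um Z.M :=
  .of_equiv' (LinearEquiv.ofBijective (LinearMap.toSpanSingleton C.Um Z.M z) hZ.2)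

end Projectives

section Frobenius

theorem TauData.τ_mem_Um (T : TauData C) {u : C.U} (hu : u ∈ C.Up) : T.τ u ∈ C.Um :=
  T.τ_Up.le ⟨u, hu, rfl⟩

/-- The pairing `pr` exhibits `B` as the twisted dual `A^τ`. -/
structure IsTauPairing (T : TauData C) (A B : CMod C) (pr : B.M →ₗ[k] A.M →ₗ[k] k) : Prop where
  bijective : Function.Bijective pr
  apply_ρ : ∀ (u : C.U) (b : B.M) (a : A.M), pr (B.ρ u b) a = pr b (A.ρ (T.τ u) a)
  apply_eq_zero : ∀ κ ν : Fin θ → ℤ, κ ≠ ν → ∀ b ∈ B.grM κ, ∀ a ∈ A.grM ν, pr b a = 0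

/-- The functional `φ` on `A` is a highest weight vector of weight `μ` of `A^τ`. -/
structure IsHWFunctional (T : TauData C) (A : CMod C) (μ : Fin θ → ℤ) (φ : A.M →ₗ[k] k) :
    Prop where
  apply_eq_zero : ∀ κ ≠ μ, ∀ x ∈ A.grM κ, φ x = 0
  apply_τ : ∀ κ ≠ 0, ∀ u ∈ Subalgebra.toSubmodule C.Up ⊓ C.grade κ, ∀ x, φ (A.ρ (T.τ u) x) = 0

variable {T : TauData C} {A B Z : CMod C} {pr : B.M →ₗ[k] Z.M →ₗ[k] k} {μ : Fin θ → ℤ} {z : Z.M}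

theorem IsTauPairing.mem_grM (h : IsTauPairing T Z B pr) {κ : Fin θ → ℤ} {b : B.M}
    (hb : ∀ ν ≠ κ, ∀ y ∈ Z.grM ν, pr b y = 0) : b ∈ B.grM κ := by
  suffices hproj : homogeneousProj B.internal κ b = b from
    hproj ▸ homogeneousProj_mem B.internal κ b
  refine h.bijective.injective (linearMap_ext_of_homogeneous Z.internal fun ν y hy => ?_)
  rcases eq_or_ne ν κ with rfl | hν
  · exact apply_homogeneousProj B.internal (f := pr.flip y)
      (fun η hη b hb => h.apply_eq_zero η ν hη b hb y hy) b
  · rw [hb ν hν y hy,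
      h.apply_eq_zero κ ν hν.symm _ (homogeneousProj_mem B.internal κ b) y hy]

theorem IsTauPairing.isHWFunctional (h : IsTauPairing T Z B pr) (hz : IsHWvec Z μ z)
    {f : A.M →ₗ[k] B.M} (hf : IsCHom A B f) : IsHWFunctional T A μ (pr.flip z ∘ₗ f) where
  apply_eq_zero κ hκ x hx := h.apply_eq_zero κ μ hκ _ (hf.2 κ x hx) z hz.1
  apply_τ κ hκ u hu x := by simp [hf.1, h.apply_ρ, T.τ_invol, hz.2 κ hκ u hu]

theorem IsVerma.exists_ρ_eq (hZ : IsVerma μ Z z) (y : Z.M) : ∃ a : C.Um, Z.ρ a z = y :=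
  hZ.2.surjective y

theorem IsVerma.exists_mem_grade_ρ_eq (hZ : IsVerma μ Z z) {κ : Fin θ → ℤ} {y : Z.M}
    (hy : y ∈ Z.grM κ) : ∃ w ∈ C.grade (κ - μ), Z.ρ w z = y := by
  obtain ⟨a, rfl⟩ := hZ.exists_ρ_eq y
  have hproj := homogeneousProj_map (f := actVec Z z) (add_left_injective μ) C.internal Z.internal
    (fun i x hx => Z.act_graded i μ x z hx hZ.1.1) (κ - μ) a
  rw [sub_add_cancel] at hproj
  exact ⟨_, homogeneousProj_mem C.internal (κ - μ) a,
    hproj.symm.trans (homogeneousProj_of_mem Z.internal hy)⟩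

theorem IsTauPairing.isCHom_ext (h : IsTauPairing T Z B pr) (hZ : IsVerma μ Z z)
    {f g : A.M →ₗ[k] B.M} (hf : IsCHom A B f) (hg : IsCHom A B g)
    (hfg : ∀ x, pr (f x) z = pr (g x) z) : f = g := by
  ext x
  refine h.bijective.injective (LinearMap.ext fun y => ?_)
  obtain ⟨a, rfl⟩ := hZ.exists_ρ_eq y
  rw [← T.τ_invol a, ← h.apply_ρ, ← h.apply_ρ, ← hf.1, ← hg.1, hfg]

/-- A linear map out of `U` which is equivariant for `U⁰` and kills the right multiples of the
augmentation ideal of `U⁺`, that is, a highest weight vector of weight `μ` of `Hom_k(U, W)`. -/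
structure AJSCtx.IsHWMap {W : Type*} [AddCommGroup W] [Module k W] (μ : Fin θ → ℤ)
    (f : C.U →ₗ[k] W) : Prop where
  map_mul_coe : ∀ (w : C.U) (s : C.U0), f (w * s) = C.weightChar μ s • f w
  map_mul_eq_zero : ∀ κ ≠ 0, ∀ u ∈ Subalgebra.toSubmodule C.Up ⊓ C.grade κ, ∀ w, f (w * u) = 0

theorem AJSCtx.IsHWMap.ext {W : Type*} [AddCommGroup W] [Module k W] {f g : C.U →ₗ[k] W}
    (hf : C.IsHWMap μ f) (hg : C.IsHWMap μ g) (hfg : ∀ a : C.Um, f a = g a) : f = g := by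
  refine AJSCtx.linearMap_ext_triangular fun a s κ b hb => ?_
  rw [← mul_assoc]
  rcases eq_or_ne κ 0 with rfl | hκ
  · obtain ⟨c, hc⟩ := Submodule.mem_span_singleton.1 (C.Up_deg0.le ⟨b.2, hb⟩)
    simp [← hc, hf.map_mul_coe, hg.map_mul_coe, hfg]
  · rw [hf.map_mul_eq_zero κ hκ b ⟨b.2, hb⟩, hg.map_mul_eq_zero κ hκ b ⟨b.2, hb⟩]

theorem IsHWvec.isHWMap (hz : IsHWvec Z μ z) : C.IsHWMap μ (actVec Z z) where
  map_mul_coe w s := by simp [actVec, Z.act_U0 s μ z hz.1, AJSCtx.weightChar]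
  map_mul_eq_zero κ hκ u hu w := by simp [actVec, hz.2 κ hκ u hu]

theorem IsHWFunctional.apply_ρ_coe {φ : A.M →ₗ[k] k} (hφ : IsHWFunctional T A μ φ) (s : C.U0)
    (x : A.M) : φ (A.ρ s x) = C.weightChar μ s * φ x := by
  refine LinearMap.congr_fun (f := φ ∘ₗ A.ρ s) (g := C.weightChar μ s • φ)
    (linearMap_ext_of_homogeneous A.internal fun κ x hx => ?_) x
  rcases eq_or_ne κ μ with rfl | hκ
  · simp [A.act_U0 s κ x hx, AJSCtx.weightChar]
  · simp [A.act_U0 s κ x hx, hφ.apply_eq_zero κ hκ x hx]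

theorem IsHWFunctional.isHWMap {φ : A.M →ₗ[k] k} (hφ : IsHWFunctional T A μ φ) (x : A.M) :
    C.IsHWMap μ (φ ∘ₗ actVec A x ∘ₗ T.τ) where
  map_mul_coe w s := by simp [actVec, T.τ_mul, T.τ_fix, hφ.apply_ρ_coe]
  map_mul_eq_zero κ hκ u hu w := by simp [actVec, T.τ_mul, hφ.apply_τ κ hκ u hu]

theorem IsHWFunctional.exists_linearMap {φ : A.M →ₗ[k] k} (hφ : IsHWFunctional T A μ φ)
    (hZ : IsVerma μ Z z) (h : IsTauPairing T Z B pr) :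
    ∃ g : A.M →ₗ[k] B.M, ∀ (w : C.U) (x : A.M), pr (g x) (Z.ρ w z) = φ (A.ρ (T.τ w) x) := by
  let e := LinearEquiv.ofBijective _ hZ.2
  let H : A.M →ₗ[k] Z.M →ₗ[k] k :=
    LinearMap.mk₂ k (fun x y => φ (A.ρ (T.τ (e.symm y)) x))
      (by intros; simp) (by intros; simp) (by intros; simp) (by intros; simp)
  have hH (x : A.M) : H x ∘ₗ actVec Z z = φ ∘ₗ actVec A x ∘ₗ T.τ := by
    have hHx : C.IsHWMap μ (H x ∘ₗ actVec Z z) :=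
      ⟨fun w s => by simp [hZ.1.isHWMap.map_mul_coe w s],
        fun κ hκ u hu w => by simp [hZ.1.isHWMap.map_mul_eq_zero κ hκ u hu w]⟩
    refine hHx.ext (hφ.isHWMap x) fun a => ?_
    exact congrArg (fun a : C.Um => φ (A.ρ (T.τ a) x)) (e.symm_apply_apply a)
  refine ⟨(LinearEquiv.ofBijective pr h.bijective).symm.toLinearMap ∘ₗ H, fun w x => ?_⟩
  have hpr := (LinearEquiv.ofBijective pr h.bijective).apply_symm_apply (H x)
  exact (LinearMap.congr_fun hpr _).trans (LinearMap.congr_fun (hH x) w)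

theorem IsHWFunctional.exists_isCHom {φ : A.M →ₗ[k] k} (hφ : IsHWFunctional T A μ φ)
    (hZ : IsVerma μ Z z) (h : IsTauPairing T Z B pr) :
    ∃ g : A.M →ₗ[k] B.M, IsCHom A B g ∧ ∀ x, pr (g x) z = φ x := by
  obtain ⟨g, hg⟩ := hφ.exists_linearMap hZ h
  refine ⟨g, ⟨fun u x => ?_, fun κ x hx => h.mem_grM fun ν hν y hy => ?_⟩, fun x => ?_⟩
  · refine h.bijective.injective (LinearMap.ext fun y => ?_)
    obtain ⟨a, rfl⟩ := hZ.exists_ρ_eq y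
    rw [h.apply_ρ, ← Module.End.mul_apply, ← map_mul, hg, hg, T.τ_mul, T.τ_invol, map_mul,
      Module.End.mul_apply]
  · obtain ⟨w, hw, rfl⟩ := hZ.exists_mem_grade_ρ_eq hy
    rw [hg]
    refine hφ.apply_eq_zero _ (fun hμ => hν ?_) _ (A.act_graded _ _ _ x (T.τ_deg _ w hw) hx)
    rw [neg_sub, sub_add_eq_add_sub, sub_eq_iff_eq_add, add_right_inj] at hμ
    exact hμ.symm
  · simpa [T.τ_one] using hg 1 x

end Frobenius

section Extension

variable {T : TauData C} {μ : Fin θ → ℤ} {E F : CMod C} {d : E.M →ₗ[k] F.M}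

theorem IsHWFunctional.comp_homogeneousProj {φ : F.M →ₗ[k] k}
    (hφ : ∀ κ ≠ 0, ∀ u ∈ Subalgebra.toSubmodule C.Up ⊓ C.grade κ, ∀ x, φ (F.ρ (T.τ u) x) = 0) :
    IsHWFunctional T F μ (φ ∘ₗ homogeneousProj F.internal μ) where
  apply_eq_zero κ hκ x hx := by simp [homogeneousProj_of_mem_of_ne F.internal hx hκ]
  apply_τ κ hκ u hu x := by
    have hproj := homogeneousProj_map (add_right_injective (-κ)) F.internal F.internal
      (fun i x => F.act_graded _ i _ x (T.τ_deg κ u hu.2)) (κ + μ) x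
    rw [neg_add_cancel_left] at hproj
    rw [LinearMap.comp_apply, hproj, hφ κ hκ u hu]

theorem IsHWFunctional.exists_extension (hd : IsCHom E F d)
    {c : F.M →ₗ[C.Um] LinearMap.range hd.linearMapUm}
    (hc : c ∘ₗ (LinearMap.range hd.linearMapUm).subtype = LinearMap.id) {ψ : E.M →ₗ[k] k}
    (hψ : IsHWFunctional T E μ ψ) (hker : LinearMap.ker d ≤ LinearMap.ker ψ) :
    ∃ φ : F.M →ₗ[k] k, IsHWFunctional T F μ φ ∧ φ ∘ₗ d = ψ := by
  obtain ⟨χ, rfl⟩ : ψ ∈ LinearMap.range d.dualMap := by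
    rw [LinearMap.range_dualMap_eq_dualAnnihilator_ker, Submodule.mem_dualAnnihilator]
    exact hker
  let c' : F.M →ₗ[C.Um] F.M := (LinearMap.range hd.linearMapUm).subtype ∘ₗ c
  have hcd (y : E.M) : c' (d y) = d y := congrArg Subtype.val (LinearMap.congr_fun hc ⟨d y, y, rfl⟩)
  refine ⟨(χ ∘ₗ c'.restrictScalars k) ∘ₗ homogeneousProj F.internal μ,
    .comp_homogeneousProj fun κ hκ u hu x => ?_, LinearMap.ext fun y => ?_⟩
  · obtain ⟨y, hy⟩ : ∃ y, d y = c' x := (c x).2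
    have hcx : c' (F.ρ (T.τ u) x) = d (E.ρ (T.τ u) y) := by
      rw [hd.1, hy]
      exact map_smul c' (⟨T.τ u, T.τ_mem_Um hu.1⟩ : C.Um) x
    exact (congrArg χ hcx).trans (hψ.apply_τ κ hκ u hu y)
  · have hproj := homogeneousProj_map Function.injective_id E.internal F.internal hd.2 μ y
    calc χ (c' (homogeneousProj F.internal μ (d y)))
        = χ (d (homogeneousProj E.internal μ y)) :=
          congrArg χ ((congrArg c' hproj).trans (hcd _))
      _ = χ (d y) := apply_homogeneousProj E.internal hψ.apply_eq_zero y

end Extension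

theorem ext_vanishing_general (T : TauData C) {μ : Fin θ → ℤ} {Q Z B : CMod C}
    [Module.Projective C.Um Q.M] {z : Z.M} (hZ : IsVerma μ Z z) (hB : IsTauDual T Z B)
    {P : ℕ → CMod C} [∀ n, Module.Projective C.Um (P n).M]
    {d : ∀ n : ℕ, (P (n + 1)).M →ₗ[k] (P n).M} (hd : ∀ n, IsCHom (P (n + 1)) (P n) (d n))
    {ε : (P 0).M →ₗ[k] Q.M} (hε : IsCHom (P 0) Q ε) (hεs : Function.Surjective ε)
    (hex0 : LinearMap.ker ε = LinearMap.range (d 0))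
    (hex : ∀ n, LinearMap.ker (d n) = LinearMap.range (d (n + 1))) (m : ℕ)
    (f : (P (m + 1)).M →ₗ[k] B.M) (hf : IsCHom (P (m + 1)) B f) (hfd : f ∘ₗ d (m + 1) = 0) :
    ∃ g : (P m).M →ₗ[k] B.M, IsCHom (P m) B g ∧ f = g ∘ₗ d m := by
  obtain ⟨pr, hbij, hτ, horth⟩ := hB
  have hpr : IsTauPairing T Z B pr := ⟨hbij, hτ, horth⟩
  obtain ⟨c, hc⟩ := exists_retraction_range_of_exact (P := fun n => (P n).M)
    (d := fun n => (hd n).linearMapUm) (ε := hε.linearMapUm) hεs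
    (Submodule.ext fun x => Submodule.ext_iff.1 hex0 x)
    (fun n => Submodule.ext fun x => Submodule.ext_iff.1 (hex n) x) m
  have hker : LinearMap.ker (d m) ≤ LinearMap.ker (pr.flip z ∘ₗ f) := by
    rw [hex, LinearMap.range_le_ker_iff, LinearMap.comp_assoc, hfd, LinearMap.comp_zero]
  obtain ⟨φ, hφ, hφd⟩ := (hpr.isHWFunctional hZ.1 hf).exists_extension (hd m) hc hker
  obtain ⟨g, hg, hgφ⟩ := hφ.exists_isCHom hZ hpr
  refine ⟨g, hg, hpr.isCHom_ext hZ hf (hg.comp (hd m)) fun x => ?_⟩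
  rw [LinearMap.comp_apply, hgφ]
  exact (LinearMap.congr_fun hφd x).symm

/-- **Vanishing of higher Ext.** For all `λ, μ ∈ ℤ^θ` and `n ≥ 1`,
`Ext^n_{C_k}(Z(λ), Z(μ)^τ) = 0`. This is expressed via projective resolutions: for any
projective resolution `⋯ → P 1 → P 0 → Z(λ) → 0` in `C_k` and any `n = m + 1 ≥ 1`, every
cocycle `f : P (m+1) → Z(μ)^τ` (i.e. `f ∘ d (m+1) = 0`) is a coboundary
(`f = g ∘ d m` for some `g : P m → Z(μ)^τ`). -/
theorem ext_vanishing {k : Type} [Field k] [IsAlgClosed k] [CharZero k]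
    {θ : ℕ} (hθ : 1 ≤ θ) (C : AJSCtx k θ) (T : TauData C)
    (lam μ : Fin θ → ℤ)
    (Zlam : CMod C) (mlam : Zlam.M) (hZlam : IsVerma lam Zlam mlam)
    (Zmu : CMod C) (mmu : Zmu.M) (hZmu : IsVerma μ Zmu mmu)
    (B : CMod C) (hB : IsTauDual T Zmu B)
    (P : ℕ → CMod C) (hP : ∀ n, CProjective (P n))
    (d : ∀ n : ℕ, (P (n + 1)).M →ₗ[k] (P n).M) (hd : ∀ n, IsCHom (P (n + 1)) (P n) (d n))
    (ε : (P 0).M →ₗ[k] Zlam.M) (hε : IsCHom (P 0) Zlam ε) (hεs : Function.Surjective ε)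
    (hex0 : LinearMap.ker ε = LinearMap.range (d 0))
    (hex : ∀ n, LinearMap.ker (d n) = LinearMap.range (d (n + 1))) :
    ∀ (m : ℕ) (f : (P (m + 1)).M →ₗ[k] B.M), IsCHom (P (m + 1)) B f →
      f ∘ₗ d (m + 1) = 0 →
      ∃ g : (P m).M →ₗ[k] B.M, IsCHom (P m) B g ∧ f = g ∘ₗ d m := by
  have := hZlam.projective_Um
  have := fun n => (hP n).projective_Um
  exact ext_vanishing_general T hZmu hB hd hε hεs hex0 hex
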